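/- There is a constant C(d) depending only on d such that for every q ≥ 1, every J ⊊ [d], every P = {I_1,...,I_k} ∈ P(J) and every L_q(X,μ)-valued d-indexed array A: C(d)^{−1} q^{(1−d+|J|)/2} |||A|||^{L_q}_P ≤ |||A|||_P ≤ C(d) q^{(d−|J|)/2} |||A|||^{L_q}_P. -/

import Mathlib

/-!
For fixed test arrays `x`, the random element of `L_q` inside `tNorm` is, at a point `t`, a chaos
`S(t) = ∑ u, b_u(t) ξ_u`, where `ξ_u` is a product of `m = d - |J|` independent standard Gaussians
(`gaussProd`) and `b_u(t)` is the sum over the indices in `J` (`coef`). The quantity inside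
`tNormLq` is the `L_q` norm of the Euclidean norm `‖b(t)‖`. The two are compared for each `x`
separately (`core`), and suprema are taken at the end; they are finite because the coefficients
are bounded by `∑ i, |A i t|` (`coef_bound`).

The probabilistic input is twofold. The `ξ_u` are orthonormal, and for `r ≥ 2` one has
`(E |S|^r)^{1/r} ≤ (4 √r)^m ‖b‖`: for `m = 1` this follows from exponential moments of a Gaussian
linear form (`stdGaussian_chaosMoment`), and the general case tensorizes by Minkowski
(`ChaosMoment.prod`, `chaos_pi`).

Upper bound (`core_upper`): by Jensen and Tonelli `E ‖S‖_q ≤ (∫ E |S(t)|^q)^{1/q}`, and the moment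
bound with exponent `max q 2` gives the factor `(4 √(max q 2))^m ≤ 64^d q^{m/2}`.

Lower bound (`core_lower`): interpolating the second moment between the first and the fourth gives
`‖b(t)‖ ≤ 64^m E |S(t)|` (`enormSq_rpow_half_le`), and the Minkowski integral inequality yields
`‖ ‖b‖ ‖_q ≤ 64^m E ‖S‖_q`. This is stronger than required, since `m ≥ 1` makes
`q^{(1 - m)/2} ≤ 1`. Hence `C = 64^d` works.
-/

open MeasureTheory ProbabilityTheory
open scoped Classical

noncomputable section

def stdGaussian (ι : Type*) [Fintype ι] : Measure (ι → ℝ) :=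
  Measure.pi fun _ => gaussianReal 0 1

abbrev GIdx (d n : ℕ) := Σ J : Finset (Fin d), ({l // l ∈ J} → Fin n)

def IsPartition {d : ℕ} (J : Finset (Fin d)) (P : Finset (Finset (Fin d))) : Prop :=
  (∀ I ∈ P, I.Nonempty) ∧ (∀ I ∈ P, ∀ I' ∈ P, I ≠ I' → Disjoint I I') ∧ P.sup id = J

def IsPartitionPair {d : ℕ} (S : Finset (Fin d)) (P P' : Finset (Finset (Fin d))) : Prop :=
  Disjoint P P' ∧ IsPartition S (P ∪ P')

def partitionsOf {d : ℕ} (J : Finset (Fin d)) : Finset (Finset (Finset (Fin d))) :=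
  Finset.univ.filter fun P => IsPartition J P

def partitionPairs (d : ℕ) :
    Finset (Finset (Finset (Fin d)) × Finset (Finset (Fin d))) :=
  Finset.univ.filter fun PP => IsPartitionPair Finset.univ PP.1 PP.2

def chaosNorm {F : Type*} [NormedAddCommGroup F] [NormedSpace ℝ F] {d n : ℕ}
    (A : (Fin d → Fin n) → F) (P' P : Finset (Finset (Fin d))) : ℝ :=
  sSup { r : ℝ | ∃ x : (I : Finset (Fin d)) → ({l // l ∈ I} → Fin n) → ℝ,
    (∀ I ∈ P, ∑ v : {l // l ∈ I} → Fin n, x I v ^ 2 ≤ 1) ∧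
    r = ∫ ω : GIdx d n → ℝ,
        ‖∑ i : Fin d → Fin n,
          ((∏ I ∈ P, x I fun l => i l.1) * ∏ J ∈ P', ω ⟨J, fun l => i l.1⟩) • A i‖
          ∂ stdGaussian (GIdx d n) }

def tNorm {F : Type*} [NormedAddCommGroup F] [NormedSpace ℝ F] {d n : ℕ}
    (A : (Fin d → Fin n) → F) (J : Finset (Fin d)) (P : Finset (Finset (Fin d))) : ℝ :=
  chaosNorm A ((Finset.univ \ J).image fun l => ({l} : Finset (Fin d))) P

def decChaos {F : Type*} [NormedAddCommGroup F] [NormedSpace ℝ F] {d n : ℕ}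
    (A : (Fin d → Fin n) → F) (ω : Fin d × Fin n → ℝ) : F :=
  ∑ i : Fin d → Fin n, (∏ k, ω (k, i k)) • A i

def momP {F : Type*} [NormedAddCommGroup F] [NormedSpace ℝ F] {d n : ℕ}
    (A : (Fin d → Fin n) → F) (p : ℝ) : ℝ :=
  (∫ ω : Fin d × Fin n → ℝ, ‖decChaos A ω‖ ^ p ∂ stdGaussian (Fin d × Fin n)) ^ (1 / p)

end

open scoped ENNReal

def glue {d n : ℕ} (J : Finset (Fin d)) (v : {l // l ∈ J} → Fin n)
    (u : {l // l ∈ Finset.univ \ J} → Fin n) : Fin d → Fin n :=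
  fun j => if h : j ∈ J then v ⟨j, h⟩
    else u ⟨j, Finset.mem_sdiff.mpr ⟨Finset.mem_univ j, h⟩⟩

noncomputable def tNormLq {X : Type*} [MeasurableSpace X] (μ : Measure X) (q : ℝ)
    {d n : ℕ} (A : (Fin d → Fin n) → Lp ℝ (ENNReal.ofReal q) μ)
    (J : Finset (Fin d)) (P : Finset (Finset (Fin d))) : ℝ :=
  sSup { r : ℝ | ∃ x : (I : Finset (Fin d)) → ({l // l ∈ I} → Fin n) → ℝ,
    (∀ I ∈ P, ∑ v : {l // l ∈ I} → Fin n, x I v ^ 2 ≤ 1) ∧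
    r = (∫ t, (∑ u : {l // l ∈ Finset.univ \ J} → Fin n,
          (∑ v : {l // l ∈ J} → Fin n,
            (∏ I ∈ P, x I fun l => glue J v u l.1) * A (glue J v u) t) ^ 2)
        ^ (q / 2) ∂ μ) ^ (1 / q) }

open scoped NNReal

/-! ### Moments and orthonormality of families of random variables -/

/-- The squared Euclidean norm of a real vector, as an extended nonnegative real. -/
noncomputable def enormSq {U : Type*} [Fintype U] (β : U → ℝ) : ℝ≥0∞ := ∑ u, ‖β u‖ₑ ^ (2 : ℝ)

/-- Every linear combination of the family `ξ` has its `L_r` norm bounded by `K` times the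
Euclidean norm of its coefficients. -/
def ChaosMoment {U Ω : Type*} [Fintype U] [MeasurableSpace Ω] (P : Measure Ω) (ξ : U → Ω → ℝ)
    (r : ℝ) (K : ℝ≥0∞) : Prop :=
  ∀ β : U → ℝ, ∫⁻ ω, ‖∑ u, β u * ξ u ω‖ₑ ^ r ∂P ≤ K ^ r * enormSq β ^ (r / 2)

/-- The family `ξ` is orthonormal in `L_2`, expressed as an isometry property. -/
def ChaosOrth {U Ω : Type*} [Fintype U] [MeasurableSpace Ω] (P : Measure Ω)
    (ξ : U → Ω → ℝ) : Prop :=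
  ∀ β : U → ℝ, ∫⁻ ω, ‖∑ u, β u * ξ u ω‖ₑ ^ (2 : ℝ) ∂P = enormSq β

/-- Minkowski inequality in `L_{r/2}` applied to the sum of the squares `Y v ^ 2`. -/
lemma lintegral_enormSq_rpow_le {V Ω : Type*} [Fintype V] [MeasurableSpace Ω] (P : Measure Ω)
    (Y : V → Ω → ℝ) (hY : ∀ v, Measurable (Y v)) {r : ℝ} (hr : 2 ≤ r) :
    ∫⁻ ω, enormSq (fun v => Y v ω) ^ (r / 2) ∂P
      ≤ (∑ v, (∫⁻ ω, ‖Y v ω‖ₑ ^ r ∂P) ^ (2 / r)) ^ (r / 2) := by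
  have h := eLpNorm'_sum_le (μ := P) (q := r / 2) (s := Finset.univ)
    (f := fun v ω => ‖Y v ω‖ₑ ^ (2 : ℝ))
    (fun v _ => ((hY v).enorm.pow_const _).aestronglyMeasurable) (by linarith)
  have h2 := ENNReal.rpow_le_rpow h (z := r / 2) (by linarith)
  rw [← lintegral_rpow_enorm_eq_rpow_eLpNorm' (by linarith)] at h2
  refine le_trans (le_of_eq ?_) (h2.trans (le_of_eq ?_))
  · simp [enormSq]
  · congr 1
    refine Finset.sum_congr rfl fun v _ => ?_
    rw [eLpNorm'_eq_lintegral_enorm]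
    simp only [enorm_eq_self, ← ENNReal.rpow_mul]
    congr 1
    · refine lintegral_congr fun ω => ?_
      congr 1; ring
    · field_simp

section prod
variable {U V Ω Ω₂ : Type*} [Fintype U] [Fintype V] [MeasurableSpace Ω] [MeasurableSpace Ω₂]
  {P : Measure Ω} {Q : Measure Ω₂} [SFinite P] [SFinite Q] {ξ : U → Ω → ℝ} {η : V → Ω₂ → ℝ}

/-- Tonelli: a chaos on a product space is, for fixed `y`, a chaos in `x` whose coefficients are
themselves chaoses in `y`. -/
lemma lintegral_chaos_prod (hξ : ∀ u, Measurable (ξ u)) (hη : ∀ v, Measurable (η v)) (r : ℝ)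
    (b : U × V → ℝ) :
    ∫⁻ z, ‖∑ p, b p * (ξ p.1 z.1 * η p.2 z.2)‖ₑ ^ r ∂(P.prod Q)
      = ∫⁻ y, ∫⁻ x, ‖∑ u, (∑ v, b (u, v) * η v y) * ξ u x‖ₑ ^ r ∂P ∂Q := by
  rw [lintegral_prod_symm' _ (by fun_prop)]
  refine lintegral_congr fun y => lintegral_congr fun x => ?_
  rw [Fintype.sum_prod_type]
  congr 2
  refine Finset.sum_congr rfl fun u _ => ?_
  rw [Finset.sum_mul]
  exact Finset.sum_congr rfl fun v _ => by ring

lemma enormSq_prod (b : U × V → ℝ) : enormSq b = ∑ u, enormSq fun v => b (u, v) := by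
  simp [enormSq, Fintype.sum_prod_type]

/-- Moment constants multiply under independent products: apply the bound for `ξ` conditionally
on the second variable, then Minkowski, then the bound for `η`. -/
lemma ChaosMoment.prod (hξ : ∀ u, Measurable (ξ u)) (hη : ∀ v, Measurable (η v)) {r : ℝ}
    (hr : 2 ≤ r) {K L : ℝ≥0∞} (h1 : ChaosMoment P ξ r K) (h2 : ChaosMoment Q η r L) :
    ChaosMoment (P.prod Q) (fun (p : U × V) z => ξ p.1 z.1 * η p.2 z.2) r (K * L) := by
  intro b
  have hr0 : (0 : ℝ) ≤ r := by linarith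
  have hr2 : (0 : ℝ) ≤ r / 2 := by linarith
  rw [lintegral_chaos_prod hξ hη]
  calc _ ≤ ∫⁻ y, K ^ r * enormSq (fun u => ∑ v, b (u, v) * η v y) ^ (r / 2) ∂Q :=
        lintegral_mono fun y => h1 _
    _ = K ^ r * ∫⁻ y, enormSq (fun u => ∑ v, b (u, v) * η v y) ^ (r / 2) ∂Q := by
        refine lintegral_const_mul _ ?_
        unfold enormSq
        fun_prop
    _ ≤ K ^ r * (∑ u, (∫⁻ y, ‖∑ v, b (u, v) * η v y‖ₑ ^ r ∂Q) ^ (2 / r)) ^ (r / 2) := by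
        gcongr
        exact lintegral_enormSq_rpow_le _ (fun u y => ∑ v, b (u, v) * η v y)
          (fun u => by fun_prop) hr
    _ ≤ K ^ r * (∑ u, (L ^ r * enormSq (fun v => b (u, v)) ^ (r / 2)) ^ (2 / r)) ^ (r / 2) := by
        gcongr with u
        exact h2 _
    _ = (K * L) ^ r * enormSq b ^ (r / 2) := by
        have : ∀ u, (L ^ r * enormSq (fun v => b (u, v)) ^ (r / 2)) ^ (2 / r)
            = L ^ (2 : ℝ) * enormSq (fun v => b (u, v)) := by
          intro u
          rw [ENNReal.mul_rpow_of_nonneg _ _ (by positivity), ← ENNReal.rpow_mul,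
            ← ENNReal.rpow_mul]
          have e1 : r * (2 / r) = 2 := by field_simp
          have e2 : r / 2 * (2 / r) = 1 := by field_simp
          rw [e1, e2, ENNReal.rpow_one]
        simp_rw [this]
        rw [← Finset.mul_sum, ← enormSq_prod, ENNReal.mul_rpow_of_nonneg _ _ hr2,
          ENNReal.mul_rpow_of_nonneg _ _ hr0, ← ENNReal.rpow_mul, mul_assoc]
        congr 3; ring_nf

lemma ChaosOrth.prod (hξ : ∀ u, Measurable (ξ u)) (hη : ∀ v, Measurable (η v))
    (h1 : ChaosOrth P ξ) (h2 : ChaosOrth Q η) :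
    ChaosOrth (P.prod Q) (fun (p : U × V) z => ξ p.1 z.1 * η p.2 z.2) := by
  intro b
  rw [lintegral_chaos_prod hξ hη]
  simp_rw [h1 _]
  unfold enormSq
  rw [lintegral_finsetSum _ (fun u _ => by fun_prop)]
  simp_rw [h2 _]
  exact (enormSq_prod b).symm
end prod

/-! ### Transport along measure-preserving maps and relabellings -/

section transport
variable {U V Ω Ω₂ : Type*} [Fintype U] [Fintype V] [MeasurableSpace Ω] [MeasurableSpace Ω₂]
  {P : Measure Ω} {Q : Measure Ω₂} {ξ : U → Ω → ℝ} {η : V → Ω₂ → ℝ}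

lemma lintegral_chaos_transport (hξ : ∀ u, Measurable (ξ u)) {f : Ω₂ → Ω}
    (hf : MeasurePreserving f Q P) (e : V ≃ U) (he : ∀ v ω, η v ω = ξ (e v) (f ω)) (r : ℝ)
    (b : V → ℝ) :
    ∫⁻ ω, ‖∑ v, b v * η v ω‖ₑ ^ r ∂Q = ∫⁻ ω, ‖∑ u, b (e.symm u) * ξ u ω‖ₑ ^ r ∂P := by
  rw [← hf.lintegral_comp (by fun_prop)]
  refine lintegral_congr fun ω => ?_
  congr 2
  rw [← e.sum_comp]
  simp [he]

lemma enormSq_comp (e : V ≃ U) (b : V → ℝ) : enormSq (fun u => b (e.symm u)) = enormSq b := by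
  unfold enormSq
  exact e.symm.sum_comp (fun v => ‖b v‖ₑ ^ (2 : ℝ))

lemma ChaosMoment.transport (hξ : ∀ u, Measurable (ξ u)) {f : Ω₂ → Ω}
    (hf : MeasurePreserving f Q P) (e : V ≃ U) (he : ∀ v ω, η v ω = ξ (e v) (f ω)) {r : ℝ}
    {K : ℝ≥0∞} (h : ChaosMoment P ξ r K) : ChaosMoment Q η r K := by
  intro b
  rw [lintegral_chaos_transport hξ hf e he, ← enormSq_comp e b]
  exact h _

lemma ChaosOrth.transport (hξ : ∀ u, Measurable (ξ u)) {f : Ω₂ → Ω}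
    (hf : MeasurePreserving f Q P) (e : V ≃ U) (he : ∀ v ω, η v ω = ξ (e v) (f ω))
    (h : ChaosOrth P ξ) : ChaosOrth Q η := by
  intro b
  rw [lintegral_chaos_transport hξ hf e he, ← enormSq_comp e b]
  exact h _
end transport

/-! ### Linear forms in independent standard Gaussians -/

instance {ι : Type*} [Fintype ι] : IsProbabilityMeasure (stdGaussian ι) := by
  unfold _root_.stdGaussian; infer_instance

lemma integral_exp_linear_stdGaussian {ι : Type*} [Fintype ι] (β : ι → ℝ) :
    Integrable (fun ω : ι → ℝ => Real.exp (∑ u, β u * ω u)) (stdGaussian ι) ∧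
    ∫ ω, Real.exp (∑ u, β u * ω u) ∂(stdGaussian ι) = Real.exp ((∑ u, β u ^ 2) / 2) := by
  constructor
  · simp_rw [Real.exp_sum]
    exact Integrable.fintype_prod (f := fun u x => Real.exp (β u * x))
      fun u => integrable_exp_mul_gaussianReal _
  · simp_rw [Real.exp_sum]
    unfold _root_.stdGaussian
    rw [integral_fintype_prod_eq_prod (f := fun u x => Real.exp (β u * x)), Finset.sum_div,
      Real.exp_sum]
    refine Finset.prod_congr rfl fun u _ => ?_
    have := congrFun (mgf_id_gaussianReal (μ := 0) (v := 1)) (β u)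
    simpa [mgf] using this

lemma enormSq_eq_ofReal {U : Type*} [Fintype U] (β : U → ℝ) :
    enormSq β = ENNReal.ofReal (∑ u, β u ^ 2) := by
  unfold enormSq
  rw [ENNReal.ofReal_sum_of_nonneg (fun _ _ => sq_nonneg _)]
  refine Finset.sum_congr rfl fun u _ => ?_
  rw [← ofReal_norm, Real.norm_eq_abs, ENNReal.ofReal_rpow_of_nonneg (abs_nonneg _) (by norm_num)]
  simp

/-- The Gaussian moment bound: `|y| ^ r ≤ (r / s) ^ r * (exp (s * y) + exp (-s * y))` for every
`s > 0`, and the moment generating function of a linear form is explicit. -/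
lemma stdGaussian_chaosMoment {ι : Type*} [Fintype ι] {r : ℝ} (hr : 1 ≤ r) :
    ChaosMoment (stdGaussian ι) (fun u ω => ω u) r (ENNReal.ofReal (4 * √r)) := by
  intro β
  rw [enormSq_eq_ofReal]
  set V := ∑ u, β u ^ 2 with hV
  have hV0 : 0 ≤ V := Finset.sum_nonneg fun _ _ => sq_nonneg _
  have hr0 : 0 < r := by linarith
  rcases hV0.eq_or_lt with h0 | hpos
  · have : ∀ u, β u = 0 := by
      intro u
      have := (Finset.sum_eq_zero_iff_of_nonneg (fun u _ => sq_nonneg (β u))).1 h0.symm u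
        (Finset.mem_univ u)
      simpa using this
    simp [this, hr0]
  -- this `s` makes the exponential moment of the form, of variance `V`, equal to `exp (r / 2)`
  set s := √(r / V) with hs
  have hs0 : 0 < s := Real.sqrt_pos.2 (by positivity)
  have hs2 : s ^ 2 * V = r := by
    rw [hs, Real.sq_sqrt (by positivity)]; field_simp
  have key : ∀ y : ℝ, |y| ^ r ≤ (r / s) ^ r * (Real.exp (s * y) + Real.exp (-s * y)) := by
    intro y
    have h1 : s * |y| / r ≤ Real.exp (s * |y| / r) := by
      linarith [Real.add_one_le_exp (s * |y| / r)]
    have h2 : (s * |y| / r) ^ r ≤ Real.exp (s * |y|) := by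
      calc _ ≤ Real.exp (s * |y| / r) ^ r := Real.rpow_le_rpow (by positivity) h1 hr0.le
        _ = _ := by rw [← Real.exp_mul]; congr 1; field_simp
    have h3 : Real.exp (s * |y|) ≤ Real.exp (s * y) + Real.exp (-s * y) := by
      rcases abs_cases y with ⟨h, _⟩ | ⟨h, _⟩ <;> rw [h]
      · linarith [Real.exp_pos (-s * y)]
      · rw [mul_neg, ← neg_mul]; linarith [Real.exp_pos (s * y)]
    calc |y| ^ r = (r / s) ^ r * (s * |y| / r) ^ r := by
          rw [← Real.mul_rpow (by positivity) (by positivity)]; congr 1; field_simp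
      _ ≤ _ := by gcongr; exact h2.trans h3
  have hI : ∀ c : ℝ, c ^ 2 = s ^ 2 →
      Integrable (fun ω : ι → ℝ => Real.exp (c * ∑ u, β u * ω u)) (stdGaussian ι) ∧
      ∫ ω, Real.exp (c * ∑ u, β u * ω u) ∂(stdGaussian ι) = Real.exp (r / 2) := by
    intro c hc
    have := integral_exp_linear_stdGaussian (fun u => c * β u)
    simp_rw [mul_pow, ← Finset.mul_sum, hc, mul_assoc, ← Finset.mul_sum] at this
    rwa [← hV, hs2] at this
  obtain ⟨i1, v1⟩ := hI s rfl
  obtain ⟨i2, v2⟩ := hI (-s) (by ring)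
  calc ∫⁻ ω, ‖∑ u, β u * ω u‖ₑ ^ r ∂(stdGaussian ι)
      ≤ ∫⁻ ω, ENNReal.ofReal ((r / s) ^ r * (Real.exp (s * ∑ u, β u * ω u)
          + Real.exp (-s * ∑ u, β u * ω u))) ∂(stdGaussian ι) := by
        refine lintegral_mono fun ω => ?_
        rw [← ofReal_norm, Real.norm_eq_abs, ENNReal.ofReal_rpow_of_nonneg (abs_nonneg _) hr0.le]
        exact ENNReal.ofReal_le_ofReal (key _)
    _ = ENNReal.ofReal ((r / s) ^ r * (2 * Real.exp (r / 2))) := by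
        rw [← ofReal_integral_eq_lintegral_ofReal
          (Integrable.const_mul (i1.add i2 : Integrable (fun ω => _ + _) _) _)
          (ae_of_all _ fun ω => by positivity), integral_const_mul, integral_add i1 i2, v1, v2]
        ring_nf
    _ ≤ _ := by
        rw [ENNReal.ofReal_rpow_of_nonneg (by positivity) hr0.le,
          ENNReal.ofReal_rpow_of_nonneg hV0 (by positivity), ← ENNReal.ofReal_mul (by positivity)]
        refine ENNReal.ofReal_le_ofReal ?_
        have e1 : r / s = √r * √V := by
          rw [hs, Real.sqrt_div hr0.le]
          have : √r ≠ 0 := by positivity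
          have : √V ≠ 0 := by positivity
          field_simp
          rw [Real.sq_sqrt hr0.le]
        have e2 : V ^ (r / 2) = √V ^ r := by
          rw [Real.sqrt_eq_rpow, ← Real.rpow_mul hV0]; ring_nf
        have e3 : (2 : ℝ) * Real.exp (r / 2) ≤ 4 ^ r := by
          have a1 : (2 : ℝ) ≤ 2 ^ r := by
            simpa using Real.rpow_le_rpow_of_exponent_le (x := 2) (by norm_num) hr
          have a2 : Real.exp (r / 2) ≤ 2 ^ r := by
            have : Real.exp (1 / 2) ≤ 2 := by
              have h2 : Real.exp (1 / 2) ^ 2 = Real.exp 1 := by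
                rw [← Real.exp_nat_mul]; norm_num
              nlinarith [Real.exp_one_lt_d9, Real.exp_pos (1 / 2)]
            calc Real.exp (r / 2) = Real.exp (1 / 2) ^ r := by rw [← Real.exp_mul]; ring_nf
              _ ≤ 2 ^ r := by gcongr
          calc (2 : ℝ) * Real.exp (r / 2) ≤ 2 ^ r * 2 ^ r := by gcongr
            _ = 4 ^ r := by rw [← Real.mul_rpow (by norm_num) (by norm_num)]; norm_num
        rw [e1, e2, Real.mul_rpow (by positivity) (by positivity),
          Real.mul_rpow (by positivity) (by positivity)]
        calc √r ^ r * √V ^ r * (2 * Real.exp (r / 2)) ≤ √r ^ r * √V ^ r * 4 ^ r := by gcongr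
          _ = _ := by ring

lemma stdGaussian_chaosOrth {ι : Type*} [Fintype ι] :
    ChaosOrth (stdGaussian ι) (fun u ω => ω u) := by
  intro β
  have hm : ∀ u, MemLp (fun x : ℝ => β u * x) 2 (gaussianReal 0 1) := fun u =>
    (memLp_id_gaussianReal 2).const_mul (β u)
  have hm' : ∀ u, MemLp (fun ω : ι → ℝ => β u * ω u) 2 (stdGaussian ι) := fun u =>
    (hm u).comp_measurePreserving (measurePreserving_eval _ u)
  have hS : MemLp (fun ω : ι → ℝ => ∑ u, β u * ω u) 2 (stdGaussian ι) :=
    memLp_finsetSum _ fun u _ => hm' u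
  have hv : Var[∑ u, fun ω : ι → ℝ => β u * ω u; _root_.stdGaussian ι]
      = ∑ u, Var[fun x => β u * x; gaussianReal 0 1] := variance_sum_pi hm
  have hmean : ∫ ω, ∑ u, β u * ω u ∂(stdGaussian ι) = 0 := by
    rw [integral_finsetSum _ fun u _ => (hm' u).integrable (by norm_num)]
    refine Finset.sum_eq_zero fun u _ => ?_
    have := integral_map (μ := _root_.stdGaussian ι) (φ := fun ω => ω u)
      (measurable_pi_apply u).aemeasurable
      (f := fun x => β u * x) (by fun_prop)
    rw [← this]
    have hmap : (_root_.stdGaussian ι).map (fun ω => ω u) = gaussianReal 0 1 :=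
      (measurePreserving_eval (fun _ : ι => gaussianReal 0 1) u).map_eq
    rw [hmap, integral_const_mul, integral_id_gaussianReal, mul_zero]
  have hInt : ∫ ω, (∑ u, β u * ω u) ^ 2 ∂(_root_.stdGaussian ι) = ∑ u, β u ^ 2 := by
    have e : (∑ u, fun ω : ι → ℝ => β u * ω u) = fun ω => ∑ u, β u * ω u := by
      ext ω; simp
    rw [e, variance_of_integral_eq_zero hS.aemeasurable hmean] at hv
    refine hv.trans (Finset.sum_congr rfl fun u _ => ?_)
    rw [variance_const_mul, variance_fun_id_gaussianReal]; simp
  rw [enormSq_eq_ofReal, ← hInt, ofReal_integral_eq_lintegral_ofReal hS.integrable_sq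
    (ae_of_all _ fun ω => sq_nonneg _)]
  refine lintegral_congr fun ω => ?_
  rw [← ofReal_norm, Real.norm_eq_abs, ENNReal.ofReal_rpow_of_nonneg (abs_nonneg _) (by norm_num)]
  simp

/-! ### Decoupled Gaussian chaoses of order `m` -/

/-- Hypercontractivity and orthonormality of the products of `m` Gaussian coordinates taken from
`m` independent Gaussian vectors, by induction on `m`. -/
lemma chaos_pi (n : ℕ) (r : ℝ) (hr : 2 ≤ r) (m : ℕ) :
    ChaosMoment (Measure.pi fun _ : Fin m => _root_.stdGaussian (Fin n))
      (fun (u : Fin m → Fin n) g => ∏ k, g k (u k)) r (ENNReal.ofReal (4 * √r) ^ m) ∧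
    ChaosOrth (Measure.pi fun _ : Fin m => _root_.stdGaussian (Fin n))
      (fun (u : Fin m → Fin n) g => ∏ k, g k (u k)) := by
  induction m with
  | zero =>
    constructor
    · intro β
      simp only [Finset.univ_eq_empty, Finset.prod_empty, mul_one, pow_zero, ENNReal.one_rpow,
        one_mul, enormSq, Fintype.sum_unique, ← ENNReal.rpow_mul, lintegral_const, measure_univ]
      rw [mul_div_cancel₀ r two_ne_zero]
    · intro β
      simp [enormSq]
  | succ m ih =>
    have mp := measurePreserving_piFinSuccAbove
      (fun _ : Fin (m + 1) => _root_.stdGaussian (Fin n)) 0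
    have he : ∀ (v : Fin (m + 1) → Fin n) (g : Fin (m + 1) → Fin n → ℝ), ∏ k, g k (v k)
        = (fun (p : Fin n × (Fin m → Fin n)) (z : (Fin n → ℝ) × (Fin m → Fin n → ℝ)) =>
          z.1 p.1 * ∏ k, z.2 k (p.2 k)) ((Fin.consEquiv fun _ => Fin n).symm v)
          (MeasurableEquiv.piFinSuccAbove (fun _ : Fin (m + 1) => Fin n → ℝ) 0 g) := by
      intro v g
      rw [Fin.prod_univ_succ]
      rfl
    have hm1 : ∀ u : Fin n, Measurable (fun ω : Fin n → ℝ => ω u) := fun u => by fun_prop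
    have hm2 : ∀ u : Fin m → Fin n,
        Measurable (fun g : Fin m → Fin n → ℝ => ∏ k, g k (u k)) := fun u => by fun_prop
    constructor
    · rw [pow_succ']
      exact ((stdGaussian_chaosMoment (by linarith)).prod hm1 hm2 hr ih.1).transport
        (fun u => by fun_prop) mp _ he
    · exact (stdGaussian_chaosOrth.prod hm1 hm2 ih.2).transport (fun u => by fun_prop) mp _ he

/-- Distinct coordinates of a standard Gaussian vector, arranged in a `κ × τ` table, form
independent standard Gaussian vectors indexed by `κ`. -/
lemma measurePreserving_subfamily {ι κ τ : Type*} [Fintype ι] [Fintype κ] [Fintype τ]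
    (f : κ × τ → ι) (hf : Function.Injective f) :
    MeasurePreserving (fun (ω : ι → ℝ) (k : κ) (j : τ) => ω (f (k, j))) (_root_.stdGaussian ι)
      (Measure.pi fun _ : κ => _root_.stdGaussian τ) := by
  refine ⟨by fun_prop, ?_⟩
  have h1 : iIndepFun (fun i (ω : ι → ℝ) => ω i) (_root_.stdGaussian ι) :=
    iIndepFun_pi (μ := fun _ : ι => gaussianReal 0 1) (X := fun _ x => x)
      fun _ => aemeasurable_id
  have h2 := (iIndepFun_iff_map_fun_eq_pi_map
    (fun i => (measurable_pi_apply (f i)).aemeasurable)).1 (h1.precomp hf)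
  have hmap : ∀ u, (_root_.stdGaussian ι).map (fun ω => ω u) = gaussianReal 0 1 := fun u =>
    (measurePreserving_eval (fun _ : ι => gaussianReal 0 1) u).map_eq
  simp only [hmap] at h2
  have h3 := Measure.infinitePi_map_curry (fun (_ : κ) (_ : τ) => gaussianReal 0 1)
  simp only [Measure.infinitePi_eq_pi] at h3
  rw [← h2, Measure.map_map (by fun_prop) (by fun_prop)] at h3
  exact h3

/-! ### Comparison of moments -/

lemma lintegral_rpow_le_of_le_one {Ω : Type*} [MeasurableSpace Ω] (P : Measure Ω)
    [IsProbabilityMeasure P] {f : Ω → ℝ≥0∞} (hf : Measurable f) {s : ℝ} (h0 : 0 ≤ s)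
    (h1 : s ≤ 1) : ∫⁻ ω, f ω ^ s ∂P ≤ (∫⁻ ω, f ω ∂P) ^ s := by
  have := ENNReal.lintegral_mul_norm_pow_le (μ := P) hf.aemeasurable
    (aemeasurable_const (b := (1 : ℝ≥0∞))) h0 (sub_nonneg.2 h1) (by ring)
  simpa using this

section one
variable {U Ω : Type*} [Fintype U] [MeasurableSpace Ω] {P : Measure Ω} {ξ : U → Ω → ℝ}

lemma ChaosMoment.mono_exponent [IsProbabilityMeasure P] (hξ : ∀ u, Measurable (ξ u)) {r q : ℝ}
    (hq : 0 < q) (hqr : q ≤ r) {K : ℝ≥0∞} (h : ChaosMoment P ξ r K) : ChaosMoment P ξ q K := by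
  intro β
  have hr : 0 < r := hq.trans_le hqr
  have e0 : r * (q / r) = q := by field_simp
  calc ∫⁻ ω, ‖∑ u, β u * ξ u ω‖ₑ ^ q ∂P = ∫⁻ ω, (‖∑ u, β u * ξ u ω‖ₑ ^ r) ^ (q / r) ∂P := by
        simp_rw [← ENNReal.rpow_mul, e0]
    _ ≤ (∫⁻ ω, ‖∑ u, β u * ξ u ω‖ₑ ^ r ∂P) ^ (q / r) :=
        lintegral_rpow_le_of_le_one P (by fun_prop) (by positivity) ((div_le_one hr).2 hqr)
    _ ≤ (K ^ r * enormSq β ^ (r / 2)) ^ (q / r) := by gcongr; exact h β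
    _ = _ := by
        rw [ENNReal.mul_rpow_of_nonneg _ _ (by positivity), ← ENNReal.rpow_mul,
          ← ENNReal.rpow_mul, e0]
        congr 2; field_simp

lemma enormSq_ne_top (β : U → ℝ) : enormSq β ≠ ⊤ := by
  rw [enormSq_eq_ofReal]; exact ENNReal.ofReal_ne_top

/-- Comparison of the first and second moments: Hölder interpolates the second moment between
the first and the fourth, and the fourth is controlled by the square of the second. -/
lemma enormSq_rpow_half_le (hξ : ∀ u, Measurable (ξ u)) {K : ℝ≥0∞}
    (h2 : ChaosOrth P ξ) (h4 : ChaosMoment P ξ 4 K) (β : U → ℝ) :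
    enormSq β ^ (1 / 2 : ℝ) ≤ K ^ 2 * ∫⁻ ω, ‖∑ u, β u * ξ u ω‖ₑ ∂P := by
  set V := enormSq β with hV
  set E := ∫⁻ ω, ‖∑ u, β u * ξ u ω‖ₑ ∂P with hE
  have hVt : V ≠ ⊤ := enormSq_ne_top β
  rcases eq_or_ne V 0 with h0 | h0
  · simp [h0]
  have h : V ≤ E ^ (2 / 3 : ℝ) * (K ^ (4 : ℝ) * V ^ (2 : ℝ)) ^ (1 / 3 : ℝ) := by
    calc V = ∫⁻ ω, ‖∑ u, β u * ξ u ω‖ₑ ^ (2 : ℝ) ∂P := (h2 β).symm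
      _ = ∫⁻ ω, ‖∑ u, β u * ξ u ω‖ₑ ^ (2 / 3 : ℝ)
            * (‖∑ u, β u * ξ u ω‖ₑ ^ (4 : ℝ)) ^ (1 / 3 : ℝ) ∂P := by
          refine lintegral_congr fun ω => ?_
          rw [← ENNReal.rpow_mul, ← ENNReal.rpow_add_of_nonneg _ _ (by norm_num) (by norm_num)]
          norm_num
      _ ≤ E ^ (2 / 3 : ℝ) * (∫⁻ ω, ‖∑ u, β u * ξ u ω‖ₑ ^ (4 : ℝ) ∂P) ^ (1 / 3 : ℝ) :=
          ENNReal.lintegral_mul_norm_pow_le (by fun_prop) (by fun_prop) (by norm_num)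
            (by norm_num) (by norm_num)
      _ ≤ _ := by
          gcongr
          convert h4 β using 3
          norm_num
  have h3 := ENNReal.rpow_le_rpow h (z := 3) (by norm_num)
  rw [ENNReal.mul_rpow_of_nonneg _ _ (by norm_num), ← ENNReal.rpow_mul, ← ENNReal.rpow_mul] at h3
  norm_num at h3
  have h5 : V ≤ E ^ 2 * K ^ 4 := by
    have e : V ^ 3 = V * V ^ 2 := by ring
    rw [e, ← mul_assoc] at h3
    exact (ENNReal.mul_le_mul_iff_left (pow_ne_zero 2 h0) (ENNReal.pow_ne_top hVt)).1 h3
  calc V ^ (1 / 2 : ℝ) ≤ (E ^ 2 * K ^ 4) ^ (1 / 2 : ℝ) := by gcongr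
    _ = ((K ^ 2 * E) ^ (2 : ℝ)) ^ (1 / 2 : ℝ) := by
        congr 1
        rw [ENNReal.rpow_two]
        ring
    _ = _ := by rw [← ENNReal.rpow_mul]; norm_num
end one

/-! ### Chaoses with coefficients in `L_q` -/

section core
variable {U Ω X : Type*} [Fintype U] [MeasurableSpace Ω] [MeasurableSpace X] {P : Measure Ω}
  [IsProbabilityMeasure P] {ξ : U → Ω → ℝ} {b : U → X → ℝ} {q : ℝ}

/-- Jensen moves the power `1 / q` outside the expectation; Tonelli and the `q`-th moment bound
at each point `t` finish the estimate. -/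
lemma core_upper (hξ : ∀ u, Measurable (ξ u)) (hb : ∀ u, Measurable (b u)) (hq : 1 ≤ q)
    (μ : Measure X) [SFinite μ] {K : ℝ≥0∞} (h : ChaosMoment P ξ q K) :
    ∫⁻ ω, (∫⁻ t, ‖∑ u, b u t * ξ u ω‖ₑ ^ q ∂μ) ^ (1 / q) ∂P
      ≤ K * (∫⁻ t, enormSq (fun u => b u t) ^ (q / 2) ∂μ) ^ (1 / q) := by
  have hq0 : 0 < q := by linarith
  have hm : Measurable fun z : Ω × X => ‖∑ u, b u z.2 * ξ u z.1‖ₑ ^ q := by fun_prop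
  calc _ ≤ (∫⁻ ω, ∫⁻ t, ‖∑ u, b u t * ξ u ω‖ₑ ^ q ∂μ ∂P) ^ (1 / q) :=
        lintegral_rpow_le_of_le_one P hm.lintegral_prod_right' (by positivity)
          ((div_le_one hq0).2 hq)
    _ = (∫⁻ t, ∫⁻ ω, ‖∑ u, b u t * ξ u ω‖ₑ ^ q ∂P ∂μ) ^ (1 / q) := by
        rw [lintegral_lintegral_swap hm.aemeasurable]
    _ ≤ (∫⁻ t, K ^ q * enormSq (fun u => b u t) ^ (q / 2) ∂μ) ^ (1 / q) := by
        gcongr with t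
        exact h _
    _ = _ := by
        rw [lintegral_const_mul _ (by unfold enormSq; fun_prop),
          ENNReal.mul_rpow_of_nonneg _ _ (by positivity), ← ENNReal.rpow_mul]
        congr 1
        rw [mul_one_div_cancel hq0.ne', ENNReal.rpow_one]

/-- The Minkowski integral inequality `‖E |S|‖_q ≤ E ‖S‖_q`, proved by pairing with `h ^ (q - 1)`
where `h t` is the Euclidean norm of the coefficients at `t`, combined with the first moment lower
bound at each point. -/
lemma core_lower (hξ : ∀ u, Measurable (ξ u)) (hb : ∀ u, Measurable (b u)) (hq : 1 ≤ q)
    (μ : Measure X) [SFinite μ] {L : ℝ≥0∞}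
    (h : ∀ β : U → ℝ, enormSq β ^ (1 / 2 : ℝ) ≤ L * ∫⁻ ω, ‖∑ u, β u * ξ u ω‖ₑ ∂P)
    (hfin : ∫⁻ t, enormSq (fun u => b u t) ^ (q / 2) ∂μ ≠ ⊤) :
    (∫⁻ t, enormSq (fun u => b u t) ^ (q / 2) ∂μ) ^ (1 / q)
      ≤ L * ∫⁻ ω, (∫⁻ t, ‖∑ u, b u t * ξ u ω‖ₑ ^ q ∂μ) ^ (1 / q) ∂P := by
  have hq0 : 0 < q := by linarith
  have hq1 : 0 ≤ q - 1 := by linarith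
  have hq_inv : 0 ≤ 1 - 1 / q := sub_nonneg.2 ((div_le_one hq0).2 hq)
  set I := ∫⁻ t, enormSq (fun u => b u t) ^ (q / 2) ∂μ with hI
  rcases eq_or_ne I 0 with h0 | h0
  · simp [h0, hq0]
  have hme : Measurable fun t => enormSq (fun u => b u t) := by unfold enormSq; fun_prop
  have hm : Measurable fun z : X × Ω => ‖∑ u, b u z.1 * ξ u z.2‖ₑ := by fun_prop
  have hm' : Measurable fun z : X × Ω => enormSq (fun u => b u z.1) ^ ((q - 1) / 2) :=
    (hme.comp measurable_fst).pow_const _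
  have hmm : Measurable fun z : X × Ω => ‖∑ u, b u z.1 * ξ u z.2‖ₑ
      * enormSq (fun u => b u z.1) ^ ((q - 1) / 2) := hm.mul hm'
  have hN : Measurable fun ω => (∫⁻ t, ‖∑ u, b u t * ξ u ω‖ₑ ^ q ∂μ) ^ (1 / q) :=
    ((hm.pow_const q).lintegral_prod_left').pow_const _
  have key : I ≤ L * (∫⁻ ω, (∫⁻ t, ‖∑ u, b u t * ξ u ω‖ₑ ^ q ∂μ) ^ (1 / q) ∂P)
      * I ^ (1 - 1 / q) := by
    calc I = ∫⁻ t, enormSq (fun u => b u t) ^ (1 / 2 : ℝ)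
            * enormSq (fun u => b u t) ^ ((q - 1) / 2) ∂μ := by
          refine lintegral_congr fun t => ?_
          rw [← ENNReal.rpow_add_of_nonneg _ _ (by norm_num) (by positivity)]
          congr 1; ring
      _ ≤ ∫⁻ t, L * ∫⁻ ω, ‖∑ u, b u t * ξ u ω‖ₑ
            * enormSq (fun u => b u t) ^ ((q - 1) / 2) ∂P ∂μ := by
          refine lintegral_mono fun t => ?_
          simp only
          rw [lintegral_mul_const _ (by fun_prop), ← mul_assoc]
          gcongr
          exact h _
      _ = L * ∫⁻ ω, ∫⁻ t, ‖∑ u, b u t * ξ u ω‖ₑ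
            * enormSq (fun u => b u t) ^ ((q - 1) / 2) ∂μ ∂P := by
          rw [lintegral_const_mul _ hmm.lintegral_prod_right',
            lintegral_lintegral_swap hmm.aemeasurable]
      _ ≤ L * ∫⁻ ω, (∫⁻ t, ‖∑ u, b u t * ξ u ω‖ₑ ^ q ∂μ) ^ (1 / q) * I ^ (1 - 1 / q) ∂P := by
          gcongr with ω
          have := ENNReal.lintegral_mul_norm_pow_le (μ := μ)
            (f := fun t => ‖∑ u, b u t * ξ u ω‖ₑ ^ q)
            (g := fun t => enormSq (fun u => b u t) ^ (q / 2)) (by fun_prop)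
            (hme.pow_const _).aemeasurable (p := 1 / q) (by positivity) hq_inv (by ring)
          refine le_trans (le_of_eq (lintegral_congr fun t => ?_)) this
          rw [← ENNReal.rpow_mul, ← ENNReal.rpow_mul, mul_one_div_cancel hq0.ne',
            ENNReal.rpow_one]
          congr 2
          field_simp
      _ = _ := by rw [lintegral_mul_const _ hN, mul_assoc]
  have e : I = I ^ (1 / q) * I ^ (1 - 1 / q) := by
    rw [← ENNReal.rpow_add_of_nonneg _ _ (by positivity) hq_inv]
    simp
  nth_rewrite 1 [e] at key
  refine (ENNReal.mul_le_mul_iff_left ?_ ?_).1 key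
  · exact (ENNReal.rpow_pos (pos_iff_ne_zero.2 h0) hfin).ne'
  · exact ENNReal.rpow_ne_top_of_nonneg hq_inv hfin

/-- Both estimates over an arbitrary measure. Tonelli is available because the coefficients
vanish off a set on which `μ` is σ-finite, by integrability. -/
lemma core (hξ : ∀ u, Measurable (ξ u)) (hb : ∀ u, Measurable (b u)) (hq : 1 ≤ q)
    (μ : Measure X) {K L : ℝ≥0∞} (hK : ChaosMoment P ξ q K)
    (hL : ∀ β : U → ℝ, enormSq β ^ (1 / 2 : ℝ) ≤ L * ∫⁻ ω, ‖∑ u, β u * ξ u ω‖ₑ ∂P)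
    (hfin : ∫⁻ t, enormSq (fun u => b u t) ^ (q / 2) ∂μ ≠ ⊤) :
    ∫⁻ ω, (∫⁻ t, ‖∑ u, b u t * ξ u ω‖ₑ ^ q ∂μ) ^ (1 / q) ∂P
      ≤ K * (∫⁻ t, enormSq (fun u => b u t) ^ (q / 2) ∂μ) ^ (1 / q) ∧
    (∫⁻ t, enormSq (fun u => b u t) ^ (q / 2) ∂μ) ^ (1 / q)
      ≤ L * ∫⁻ ω, (∫⁻ t, ‖∑ u, b u t * ξ u ω‖ₑ ^ q ∂μ) ^ (1 / q) ∂P := by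
  have hq0 : 0 < q := by linarith
  have hme : Measurable fun t => (enormSq (fun u => b u t)) ^ (q / 2) := by
    unfold enormSq; fun_prop
  have hInt : Integrable (fun t => ((enormSq (fun u => b u t)) ^ (q / 2)).toReal) μ :=
    integrable_toReal_of_lintegral_ne_top hme.aemeasurable hfin
  obtain ⟨s, hs, hs0, hsσ⟩ := ((memLp_one_iff_integrable.2
    hInt).finStronglyMeasurable_of_stronglyMeasurable hme.ennreal_toReal.stronglyMeasurable
      one_ne_zero ENNReal.one_ne_top).exists_set_sigmaFinite
  have hz : ∀ t ∉ s, enormSq (fun u => b u t) = 0 := by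
    intro t ht
    have h1 := hs0 t ht
    rw [ENNReal.toReal_eq_zero_iff] at h1
    rcases h1 with h1 | h1
    · exact (ENNReal.rpow_eq_zero_iff_of_pos (by positivity)).1 h1
    · exact absurd h1 (ENNReal.rpow_ne_top_of_nonneg (by positivity) (enormSq_ne_top _))
  have hzb : ∀ t ∉ s, ∀ u, b u t = 0 := by
    intro t ht u
    have := hz t ht
    simp only [enormSq, Finset.sum_eq_zero_iff] at this
    simpa using this u (Finset.mem_univ u)
  have r1 : ∫⁻ t, enormSq (fun u => b u t) ^ (q / 2) ∂μ
      = ∫⁻ t in s, enormSq (fun u => b u t) ^ (q / 2) ∂μ := by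
    refine (setLIntegral_eq_of_support_subset ?_).symm
    refine Function.support_subset_iff'.2 fun t ht => ?_
    rw [hz t ht, ENNReal.zero_rpow_of_pos (by positivity)]
  have r2 : ∀ ω, ∫⁻ t, ‖∑ u, b u t * ξ u ω‖ₑ ^ q ∂μ
      = ∫⁻ t in s, ‖∑ u, b u t * ξ u ω‖ₑ ^ q ∂μ := by
    intro ω
    refine (setLIntegral_eq_of_support_subset ?_).symm
    refine Function.support_subset_iff'.2 fun t ht => ?_
    simp [hzb t ht, hq0]
  simp_rw [r2]
  rw [r1] at hfin ⊢
  exact ⟨core_upper hξ hb hq _ hK, core_lower hξ hb hq _ hL hfin⟩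
end core

/-! ### The chaos attached to an array -/

/-- Splitting a multi-index into its coordinates outside `J` and inside `J`. -/
def glueEquiv {d n : ℕ} (J : Finset (Fin d)) :
    ({l // l ∈ Finset.univ \ J} → Fin n) × ({l // l ∈ J} → Fin n) ≃ (Fin d → Fin n) where
  toFun p := glue J p.2 p.1
  invFun i := (fun l => i l.1, fun l => i l.1)
  left_inv p := by
    refine Prod.ext (funext fun l => ?_) (funext fun l => ?_)
    · simp only [glue]
      rw [dif_neg (Finset.mem_sdiff.1 l.2).2]
    · simp only [glue]
      rw [dif_pos l.2]
  right_inv i := by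
    funext j
    simp only [glue]
    split_ifs <;> rfl

/-- The product over `l ∉ J` of the Gaussian variables indexed by `({l}, u l)`. -/
noncomputable def gaussProd {d n : ℕ} (J : Finset (Fin d)) (u : {l // l ∈ Finset.univ \ J} → Fin n)
    (ω : GIdx d n → ℝ) : ℝ :=
  ∏ l : {l // l ∈ Finset.univ \ J}, ω ⟨{l.1}, fun _ => u l⟩

lemma measurable_gaussProd {d n : ℕ} (J : Finset (Fin d))
    (u : {l // l ∈ Finset.univ \ J} → Fin n) : Measurable (gaussProd J u) := by
  unfold gaussProd; fun_prop

/-- The products `gaussProd J u` form, up to relabelling, a decoupled chaos of order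
`d - |J|`, since distinct pairs `(l, u l)` pick distinct Gaussian coordinates. -/
lemma gaussProd_chaos {d n : ℕ} (J : Finset (Fin d)) {r : ℝ} (hr : 2 ≤ r) :
    ChaosMoment (_root_.stdGaussian (GIdx d n)) (gaussProd (n := n) J) r
      (ENNReal.ofReal (4 * √r) ^ (Finset.univ \ J).card) ∧
    ChaosOrth (_root_.stdGaussian (GIdx d n)) (gaussProd (n := n) J) := by
  obtain ⟨h1, h2⟩ := chaos_pi n r hr (Finset.univ \ J).card
  let e := (Finset.univ \ J).equivFin
  let f : Fin (Finset.univ \ J).card × Fin n → GIdx d n :=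
    fun p => ⟨{(e.symm p.1).1}, fun _ => p.2⟩
  have hf : Function.Injective f := by
    rintro ⟨k, j⟩ ⟨k', j'⟩ h
    simp only [f, Sigma.mk.injEq, Finset.singleton_inj] at h
    obtain ⟨ha, hb⟩ := h
    have hk : k = k' := e.symm.injective (Subtype.ext ha)
    subst hk
    have hb' := congrFun (eq_of_heq hb) ⟨_, Finset.mem_singleton_self _⟩
    exact Prod.ext rfl hb'
  have mp := measurePreserving_subfamily f hf
  have he : ∀ (v : {l // l ∈ Finset.univ \ J} → Fin n) (ω : GIdx d n → ℝ), gaussProd J v ω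
      = ∏ k, ω (f (k, (e.arrowCongr (Equiv.refl (Fin n))) v k)) := by
    intro v ω
    unfold gaussProd
    rw [← e.symm.prod_comp]
    rfl
  exact ⟨h1.transport (fun u => by fun_prop) mp (e.arrowCongr (Equiv.refl (Fin n))) he,
    h2.transport (fun u => by fun_prop) mp (e.arrowCongr (Equiv.refl (Fin n))) he⟩

lemma prod_singletons {d n : ℕ} (J : Finset (Fin d)) (ω : GIdx d n → ℝ)
    (u : {l // l ∈ Finset.univ \ J} → Fin n) (v : {l // l ∈ J} → Fin n) :
    ∏ I ∈ (Finset.univ \ J).image (fun l => ({l} : Finset (Fin d))),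
      ω ⟨I, fun l => glue J v u l.1⟩ = gaussProd J u ω := by
  rw [Finset.prod_image (fun a _ b _ h => Finset.singleton_injective h), gaussProd,
    ← Finset.prod_coe_sort]
  refine Finset.prod_congr rfl fun l _ => ?_
  congr 2
  funext l'
  have : l'.1 = l.1 := Finset.mem_singleton.1 l'.2
  simp only [glue]
  have hn : l'.1 ∉ J := by rw [this]; exact (Finset.mem_sdiff.1 l.2).2
  rw [dif_neg hn]
  congr 1
  exact Subtype.ext this

section final
variable {X : Type*} [MeasurableSpace X] {μ : Measure X} {q : ℝ} {d n : ℕ}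

/-- The coefficient at `t` of `gaussProd J u` in the chaos defined by `A` and the test arrays
`x`: the sum over the indices in `J`. -/
noncomputable def coef (A : (Fin d → Fin n) → Lp ℝ (ENNReal.ofReal q) μ)
    (J : Finset (Fin d)) (P : Finset (Finset (Fin d)))
    (x : (I : Finset (Fin d)) → ({l // l ∈ I} → Fin n) → ℝ)
    (u : {l // l ∈ Finset.univ \ J} → Fin n) (t : X) : ℝ :=
  ∑ v : {l // l ∈ J} → Fin n,
    (∏ I ∈ P, x I fun l => glue J v u l.1) * A (glue J v u) t

variable (A : (Fin d → Fin n) → Lp ℝ (ENNReal.ofReal q) μ) (J : Finset (Fin d))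
  (P : Finset (Finset (Fin d))) (x : (I : Finset (Fin d)) → ({l // l ∈ I} → Fin n) → ℝ)

lemma measurable_coef (u : {l // l ∈ Finset.univ \ J} → Fin n) : Measurable (coef A J P x u) := by
  unfold coef
  have : ∀ i, Measurable (A i : X → ℝ) := fun i => (Lp.stronglyMeasurable (A i)).measurable
  fun_prop

/-- The quantity inside the supremum defining `tNormLq`, as a Lebesgue integral. -/
lemma integral_eq_toReal (hq : 1 ≤ q) :
    (∫ t, (∑ u : {l // l ∈ Finset.univ \ J} → Fin n,
          (∑ v : {l // l ∈ J} → Fin n,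
            (∏ I ∈ P, x I fun l => glue J v u l.1) * A (glue J v u) t) ^ 2)
        ^ (q / 2) ∂ μ) ^ (1 / q)
      = ((∫⁻ t, enormSq (fun u => coef A J P x u t) ^ (q / 2) ∂μ) ^ (1 / q)).toReal := by
  have hm := measurable_coef A J P x
  change (∫ t, (∑ u, (coef A J P x u t) ^ 2) ^ (q / 2) ∂ μ) ^ (1 / q) = _
  rw [integral_eq_lintegral_of_nonneg_ae (ae_of_all _ fun t => by positivity)
    (Measurable.aestronglyMeasurable (by fun_prop)), ← ENNReal.toReal_rpow]
  congr 2
  refine lintegral_congr fun t => ?_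
  rw [enormSq_eq_ofReal, ENNReal.ofReal_rpow_of_nonneg (by positivity) (by positivity)]

lemma Lp_sum_smul_coeFn {ι : Type*} [Fintype ι] (c : ι → ℝ)
    (B : ι → Lp ℝ (ENNReal.ofReal q) μ) :
    ⇑(∑ i, c i • B i) =ᵐ[μ] fun t => ∑ i, c i * B i t := by
  have h1 := Lp.coeFn_fun_finsetSum Finset.univ fun i => c i • B i
  have h2 := ae_all_iff.2 fun i => Lp.coeFn_smul (c i) (B i)
  filter_upwards [h1, h2] with t ht1 ht2
  rw [ht1]
  refine Finset.sum_congr rfl fun i _ => ?_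
  rw [ht2 i]
  rfl

lemma Lp_sum_smul_enorm {ι : Type*} [Fintype ι] (hq : 1 ≤ q) (c : ι → ℝ)
    (B : ι → Lp ℝ (ENNReal.ofReal q) μ) :
    ‖∑ i, c i • B i‖ₑ = (∫⁻ t, ‖∑ i, c i * B i t‖ₑ ^ q ∂μ) ^ (1 / q) := by
  have hq0 : 0 < q := by linarith
  rw [Lp.enorm_def, eLpNorm_eq_lintegral_rpow_enorm_toReal (by simpa using hq0)
    ENNReal.ofReal_ne_top, ENNReal.toReal_ofReal hq0.le]
  congr 1
  refine lintegral_congr_ae ?_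
  filter_upwards [Lp_sum_smul_coeFn c B] with t ht
  rw [ht]

/-- Grouping the indices outside `J` turns the pointwise chaos into a linear combination of the
products `gaussProd J u`. -/
lemma sum_eq_sum_coef (ω : GIdx d n → ℝ) (t : X) :
    ∑ i : Fin d → Fin n, ((∏ I ∈ P, x I fun l => i l.1) *
        ∏ I ∈ (Finset.univ \ J).image (fun l => ({l} : Finset (Fin d))),
          ω ⟨I, fun l => i l.1⟩) * A i t
      = ∑ u, coef A J P x u t * gaussProd J u ω := by
  rw [← (glueEquiv J).sum_comp, Fintype.sum_prod_type]
  refine Finset.sum_congr rfl fun u _ => ?_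
  rw [coef, Finset.sum_mul]
  refine Finset.sum_congr rfl fun v _ => ?_
  have h := prod_singletons J ω u v
  change ((∏ I ∈ P, x I fun l => glue J v u l.1) *
    ∏ I ∈ (Finset.univ \ J).image (fun l => ({l} : Finset (Fin d))),
      ω ⟨I, fun l => glue J v u l.1⟩) * A (glue J v u) t = _
  rw [h]
  ring

/-- The Bochner expectation of the `L_q` norm as an iterated Lebesgue integral of pointwise
values. -/
lemma integral_norm_sum_smul {Ω ι : Type*} [MeasurableSpace Ω] [Fintype ι] (ν : Measure Ω)
    [Fact ((1 : ℝ≥0∞) ≤ ENNReal.ofReal q)] (hq : 1 ≤ q) (c : ι → Ω → ℝ)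
    (hc : ∀ i, Measurable (c i)) (B : ι → Lp ℝ (ENNReal.ofReal q) μ) :
    ∫ ω, ‖∑ i, c i ω • B i‖ ∂ν
      = (∫⁻ ω, (∫⁻ t, ‖∑ i, c i ω * B i t‖ₑ ^ q ∂μ) ^ (1 / q) ∂ν).toReal := by
  have hm : AEStronglyMeasurable (fun ω => ∑ i, c i ω • B i) ν :=
    Finset.aestronglyMeasurable_fun_sum _ fun i _ =>
      ((hc i).stronglyMeasurable.smul_const (B i)).aestronglyMeasurable
  rw [integral_norm_eq_lintegral_enorm hm]
  congr 1
  exact lintegral_congr fun ω => Lp_sum_smul_enorm hq (fun i => c i ω) B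

/-- The quantity inside the supremum defining `tNorm`, as an iterated Lebesgue integral. -/
lemma chaos_eq_toReal [Fact ((1 : ℝ≥0∞) ≤ ENNReal.ofReal q)] (hq : 1 ≤ q) :
    ∫ ω : GIdx d n → ℝ,
        ‖∑ i : Fin d → Fin n,
          ((∏ I ∈ P, x I fun l => i l.1) *
            ∏ I ∈ (Finset.univ \ J).image (fun l => ({l} : Finset (Fin d))),
              ω ⟨I, fun l => i l.1⟩) • A i‖ ∂ _root_.stdGaussian (GIdx d n)
      = (∫⁻ ω, (∫⁻ t, ‖∑ u, coef A J P x u t * gaussProd J u ω‖ₑ ^ q ∂μ) ^ (1 / q)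
          ∂ _root_.stdGaussian (GIdx d n)).toReal := by
  rw [integral_norm_sum_smul _ hq (fun (i : Fin d → Fin n) (ω : GIdx d n → ℝ) =>
    (∏ I ∈ P, x I fun l => i l.1) *
      ∏ I ∈ (Finset.univ \ J).image (fun l => ({l} : Finset (Fin d))),
        ω ⟨I, fun l => i l.1⟩) (fun i => by fun_prop) A]
  simp_rw [sum_eq_sum_coef]

/-- A pointwise bound independent of the test arrays; it makes both suprema finite. -/
lemma coef_bound (hx : ∀ I ∈ P, ∑ v : {l // l ∈ I} → Fin n, x I v ^ 2 ≤ 1) (hq : 1 ≤ q) (t : X) :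
    enormSq (fun u => coef A J P x u t) ^ (q / 2) ≤ ‖∑ i, |A i t|‖ₑ ^ q := by
  have hx1 : ∀ I ∈ P, ∀ w, |x I w| ≤ 1 := by
    intro I hI w
    rw [← sq_le_one_iff_abs_le_one]
    exact (Finset.single_le_sum (f := fun v => x I v ^ 2) (fun v _ => sq_nonneg _)
      (Finset.mem_univ w)).trans (hx I hI)
  have hsum : ∑ u, |coef A J P x u t| ≤ ∑ i, |A i t| := by
    rw [← (glueEquiv J).sum_comp, Fintype.sum_prod_type]
    refine Finset.sum_le_sum fun u _ => ?_
    refine (Finset.abs_sum_le_sum_abs _ _).trans (Finset.sum_le_sum fun v _ => ?_)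
    rw [abs_mul, Finset.abs_prod]
    exact mul_le_of_le_one_left (abs_nonneg _)
      (Finset.prod_le_one (fun _ _ => abs_nonneg _) fun I hI => hx1 I hI _)
  have h0 : 0 ≤ ∑ i, |A i t| := Finset.sum_nonneg fun _ _ => abs_nonneg _
  have hsq : ∑ u, coef A J P x u t ^ 2 ≤ (∑ i, |A i t|) ^ 2 := by
    calc ∑ u, coef A J P x u t ^ 2 = ∑ u, |coef A J P x u t| ^ 2 := by simp
      _ ≤ (∑ u, |coef A J P x u t|) ^ 2 :=
        Finset.sum_sq_le_sq_sum_of_nonneg fun _ _ => abs_nonneg _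
      _ ≤ _ := by gcongr
  calc enormSq (fun u => coef A J P x u t) ^ (q / 2)
      ≤ (ENNReal.ofReal ((∑ i, |A i t|) ^ 2)) ^ (q / 2) := by
        rw [enormSq_eq_ofReal]; gcongr
    _ = _ := by
        rw [Real.enorm_of_nonneg h0, ENNReal.ofReal_pow h0, ← ENNReal.rpow_two,
          ← ENNReal.rpow_mul]
        congr 1; ring

lemma bound_ne_top (hq : 1 ≤ q) : ∫⁻ t, ‖∑ i, |A i t|‖ₑ ^ q ∂μ ≠ ⊤ := by
  have hq0 : 0 < q := by linarith
  have hm : MemLp (fun t => ∑ i, |A i t|) (ENNReal.ofReal q) μ :=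
    memLp_finsetSum _ fun i _ => (Lp.memLp (A i)).abs
  have := lintegral_rpow_enorm_lt_top_of_eLpNorm_lt_top (by simpa using hq0)
    ENNReal.ofReal_ne_top hm.2
  rw [ENNReal.toReal_ofReal hq0.le] at this
  exact this.ne

end final

lemma sSup_le_mul_sSup {α : Type*} {S : α → Prop} (f g : α → ℝ) {c : ℝ} (hc : 0 ≤ c)
    (hne : ∃ a, S a) (hg : ∃ M, ∀ a, S a → g a ≤ M) (h : ∀ a, S a → f a ≤ c * g a) :
    sSup {r | ∃ a, S a ∧ r = f a} ≤ c * sSup {r | ∃ a, S a ∧ r = g a} := by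
  obtain ⟨a0, ha0⟩ := hne
  obtain ⟨M, hM⟩ := hg
  refine csSup_le ⟨_, a0, ha0, rfl⟩ ?_
  rintro r ⟨a, ha, rfl⟩
  refine (h a ha).trans (mul_le_mul_of_nonneg_left (le_csSup ⟨M, ?_⟩ ⟨a, ha, rfl⟩) hc)
  rintro r ⟨a, ha, rfl⟩
  exact hM a ha

/-! ### Comparison of the two norms -/

theorem tNorm_Lq_comparison (d : ℕ) (hd : 1 ≤ d) :
    ∃ C : ℝ, 0 < C ∧
      ∀ (n : ℕ) (q : ℝ) (hq : 1 ≤ q) (X : Type*) (mX : MeasurableSpace X)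
        (μ : Measure X),
        haveI : Fact ((1 : ℝ≥0∞) ≤ ENNReal.ofReal q) :=
          ⟨by rw [← ENNReal.ofReal_one]; exact ENNReal.ofReal_le_ofReal hq⟩
        ∀ (A : (Fin d → Fin n) → Lp ℝ (ENNReal.ofReal q) μ)
          (J : Finset (Fin d)) (P : Finset (Finset (Fin d))),
          J ≠ Finset.univ → IsPartition J P →
          C⁻¹ * q ^ ((1 - (d : ℝ) + J.card) / 2) * tNormLq μ q A J P ≤ tNorm A J P ∧
          tNorm A J P ≤ C * q ^ (((d : ℝ) - J.card) / 2) * tNormLq μ q A J P := by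
  refine ⟨64 ^ d, by positivity, ?_⟩
  intro n q hq X mX μ
  have : Fact ((1 : ℝ≥0∞) ≤ ENNReal.ofReal q) :=
    ⟨by rw [← ENNReal.ofReal_one]; exact ENNReal.ofReal_le_ofReal hq⟩
  intro A J P hJ _
  have hq0 : 0 < q := by linarith
  set m := (Finset.univ \ J).card with hm
  have hJd : J.card < d := by
    simpa using Finset.card_lt_card (Finset.ssubset_univ_iff.2 hJ)
  have hmd : m = d - J.card := by
    rw [hm, Finset.card_sdiff_of_subset (Finset.subset_univ J)]; simp
  have hmR : (m : ℝ) = (d : ℝ) - J.card := by rw [hmd, Nat.cast_sub hJd.le]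
  have hm_le : m ≤ d := by omega
  obtain ⟨h4, h2⟩ := gaussProd_chaos (n := n) J (r := 4) (by norm_num)
  have hr := (gaussProd_chaos (n := n) J (r := max q 2) (le_max_right _ _)).1
  have hξ := measurable_gaussProd (n := n) J
  have hK := hr.mono_exponent hξ hq0 (le_max_left _ _)
  have hL := enormSq_rpow_half_le hξ h2 h4
  set K : ℝ≥0∞ := ENNReal.ofReal (4 * √(max q 2)) ^ m with hKdef
  set L : ℝ≥0∞ := (ENNReal.ofReal (4 * √4) ^ m) ^ 2 with hLdef
  have hKt : K ≠ ⊤ := ENNReal.pow_ne_top ENNReal.ofReal_ne_top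
  have hLt : L ≠ ⊤ := ENNReal.pow_ne_top (ENNReal.pow_ne_top ENNReal.ofReal_ne_top)
  have hKr : K.toReal ≤ 64 ^ d * q ^ (((d : ℝ) - J.card) / 2) := by
    have e : q ^ (((d : ℝ) - J.card) / 2) = √q ^ m := by
      rw [← hmR, Real.sqrt_eq_rpow, ← Real.rpow_natCast, ← Real.rpow_mul hq0.le]
      congr 1; ring
    have h8 : 4 * √(max q 2) ≤ 64 * √q := by
      have : √(max q 2) ≤ √(2 ^ 2 * q) :=
        Real.sqrt_le_sqrt (max_le (by linarith) (by linarith))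
      rw [Real.sqrt_mul (by norm_num), Real.sqrt_sq (by norm_num)] at this
      nlinarith [Real.sqrt_nonneg q]
    rw [hKdef, ENNReal.toReal_pow, ENNReal.toReal_ofReal (by positivity), e]
    calc (4 * √(max q 2)) ^ m ≤ (64 * √q) ^ m := by gcongr
      _ = 64 ^ m * √q ^ m := mul_pow _ _ _
      _ ≤ 64 ^ d * √q ^ m := by gcongr; norm_num
  have hLr : L.toReal ≤ 64 ^ d := by
    have : √(4 : ℝ) = 2 := by rw [show (4 : ℝ) = 2 ^ 2 by norm_num, Real.sqrt_sq (by norm_num)]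
    rw [hLdef, ENNReal.toReal_pow, ENNReal.toReal_pow, ENNReal.toReal_ofReal (by positivity), this,
      ← pow_mul, mul_comm m 2, pow_mul]
    norm_num
    exact pow_le_pow_right₀ (by norm_num) hm_le
  -- `H x` and `N x` are the quantities whose suprema over admissible `x` are the two norms
  let H (x : (I : Finset (Fin d)) → ({l // l ∈ I} → Fin n) → ℝ) : ℝ≥0∞ :=
    (∫⁻ t, enormSq (fun u => coef A J P x u t) ^ (q / 2) ∂μ) ^ (1 / q)
  let N (x : (I : Finset (Fin d)) → ({l // l ∈ I} → Fin n) → ℝ) : ℝ≥0∞ :=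
    ∫⁻ ω, (∫⁻ t, ‖∑ u, coef A J P x u t * gaussProd J u ω‖ₑ ^ q ∂μ) ^ (1 / q)
      ∂ _root_.stdGaussian (GIdx d n)
  let S (x : (I : Finset (Fin d)) → ({l // l ∈ I} → Fin n) → ℝ) : Prop :=
    ∀ I ∈ P, ∑ v : {l // l ∈ I} → Fin n, x I v ^ 2 ≤ 1
  have hT : tNorm A J P = sSup {r | ∃ x, S x ∧ r = (N x).toReal} := by
    unfold tNorm chaosNorm
    simp_rw [chaos_eq_toReal A J P _ hq]
    rfl
  have hTq : tNormLq μ q A J P = sSup {r | ∃ x, S x ∧ r = (H x).toReal} := by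
    unfold tNormLq
    simp_rw [integral_eq_toReal A J P _ hq]
    rfl
  set M : ℝ≥0∞ := (∫⁻ t, ‖∑ i, |A i t|‖ₑ ^ q ∂μ) ^ (1 / q) with hM
  have hMt : M ≠ ⊤ := ENNReal.rpow_ne_top_of_nonneg (by positivity) (bound_ne_top A hq)
  have hHM : ∀ x, S x → H x ≤ M := fun x hx =>
    ENNReal.rpow_le_rpow (lintegral_mono fun t => coef_bound A J P x hx hq t) (by positivity)
  have hHt : ∀ x, S x → H x ≠ ⊤ := fun x hx => ne_top_of_le_ne_top hMt (hHM x hx)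
  have hcore : ∀ x, S x → N x ≤ K * H x ∧ H x ≤ L * N x := fun x hx =>
    core hξ (measurable_coef A J P x) hq μ hK hL
      (ne_top_of_le_ne_top (bound_ne_top A hq)
        (lintegral_mono fun t => coef_bound A J P x hx hq t))
  have hNt : ∀ x, S x → N x ≠ ⊤ := fun x hx =>
    ne_top_of_le_ne_top (ENNReal.mul_ne_top hKt (hHt x hx)) (hcore x hx).1
  have hup : ∀ x, S x → (N x).toReal ≤ K.toReal * (H x).toReal := fun x hx => by
    rw [← ENNReal.toReal_mul]
    exact ENNReal.toReal_mono (ENNReal.mul_ne_top hKt (hHt x hx)) (hcore x hx).1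
  have hlow : ∀ x, S x → (H x).toReal ≤ L.toReal * (N x).toReal := fun x hx => by
    rw [← ENNReal.toReal_mul]
    exact ENNReal.toReal_mono (ENNReal.mul_ne_top hLt (hNt x hx)) (hcore x hx).2
  have hHb : ∀ x, S x → (H x).toReal ≤ M.toReal := fun x hx => ENNReal.toReal_mono hMt (hHM x hx)
  have hne : ∃ x, S x := ⟨fun _ _ => 0, fun _ _ => by simp⟩
  have hT0 : 0 ≤ tNorm A J P := by
    rw [hT]
    refine Real.sSup_nonneg ?_
    rintro r ⟨x, -, rfl⟩
    exact ENNReal.toReal_nonneg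
  have hTq0 : 0 ≤ tNormLq μ q A J P := by
    rw [hTq]
    refine Real.sSup_nonneg ?_
    rintro r ⟨x, -, rfl⟩
    exact ENNReal.toReal_nonneg
  have upper : tNorm A J P ≤ K.toReal * tNormLq μ q A J P := by
    rw [hT, hTq]
    exact sSup_le_mul_sSup _ _ ENNReal.toReal_nonneg hne ⟨_, hHb⟩ hup
  have lower : tNormLq μ q A J P ≤ L.toReal * tNorm A J P := by
    rw [hT, hTq]
    refine sSup_le_mul_sSup _ _ ENNReal.toReal_nonneg hne ⟨K.toReal * M.toReal, fun x hx => ?_⟩ hlow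
    exact (hup x hx).trans (mul_le_mul_of_nonneg_left (hHb x hx) ENNReal.toReal_nonneg)
  constructor
  · have hpow : q ^ ((1 - (d : ℝ) + J.card) / 2) ≤ 1 := by
      refine Real.rpow_le_one_of_one_le_of_nonpos hq ?_
      have : ((J.card + 1 : ℕ) : ℝ) ≤ d := by exact_mod_cast hJd
      push_cast at this
      linarith
    have hC : (0 : ℝ) < 64 ^ d := by positivity
    calc ((64 : ℝ) ^ d)⁻¹ * q ^ ((1 - (d : ℝ) + J.card) / 2) * tNormLq μ q A J P
        ≤ ((64 : ℝ) ^ d)⁻¹ * 1 * (64 ^ d * tNorm A J P) := by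
          gcongr
          exact lower.trans (by gcongr)
      _ = tNorm A J P := by field_simp
  · exact upper.trans (by gcongr)
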